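/- For every J ⊆ 𝒥 with |J| ≤ M, there is a constant C depending only on m and K such that the empirical-norm metric entropy of the normalized class H(J) satisfies H(u, H(J), ‖·‖_n) ≤ C u^{−2/m} for all u ∈ (0,1). -/

import Mathlib

open MeasureTheory ProbabilityTheory

noncomputable section

namespace Census

/-- Additive representation indexed by `{(j,k) : j ≤ k}`: `main j` is the (univariate)
diagonal component for `(j,j)`, `inter j k` the bivariate component for `j < k`;
all components are `m`-times continuously differentiable. -/
structure AddRepM (p m : ℕ) where
  main : Fin p → ℝ → ℝ
  inter : Fin p → Fin p → ℝ → ℝ → ℝ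
  smooth_main : ∀ j, ContDiff ℝ (m : ℕ∞) (main j)
  smooth_inter : ∀ j k, ContDiff ℝ (m : ℕ∞) (fun q : ℝ × ℝ => inter j k q.1 q.2)

namespace AddRepM
variable {p m : ℕ}

def toFun (R : AddRepM p m) (x : Fin p → ℝ) : ℝ :=
  (∑ j, R.main j (x j)) + ∑ j, ∑ k, if j < k then R.inter j k (x j) (x k) else 0

def Gcount (R : AddRepM p m) : ℕ :=
  Nat.card {j : Fin p // R.main j ≠ 0} +
    Nat.card {q : Fin p × Fin p // q.1 < q.2 ∧ R.inter q.1 q.2 ≠ 0}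

end AddRepM

/-- Mixed partial derivative `∂^{a+b} g / ∂u^a ∂v^b`. -/
def pd (a b : ℕ) (g : ℝ → ℝ → ℝ) (u v : ℝ) : ℝ :=
  iteratedDeriv a (fun t => iteratedDeriv b (g t) v) u

/-- `m`-th order smoothness penalty of a univariate component. -/
def Omega1M (m : ℕ) (h : ℝ → ℝ) : ℝ := ∫ u in (0:ℝ)..1, (iteratedDeriv m h u) ^ 2

/-- `m`-th order smoothness penalty of a bivariate component:
`Σ_{a+b=m} ‖∂^m g/∂u^a ∂v^b‖²_{L²([0,1]²)}`. -/
def Omega2M (m : ℕ) (g : ℝ → ℝ → ℝ) : ℝ :=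
  ∑ a ∈ Finset.range (m + 1),
    ∫ q in (Set.Icc (0:ℝ) 1) ×ˢ (Set.Icc (0:ℝ) 1), (pd a (m - a) g q.1 q.2) ^ 2

def OmegaGrM {p m : ℕ} (R : AddRepM p m) : ℝ :=
  (∑ j, Omega1M m (R.main j)) + ∑ j, ∑ k, if j < k then Omega2M m (R.inter j k) else 0

def OmegaTildeGrM {p m : ℕ} (R : AddRepM p m) : ℝ :=
  (∑ j, Real.sqrt (Omega1M m (R.main j))) +
    ∑ j, ∑ k, if j < k then Real.sqrt (Omega2M m (R.inter j k)) else 0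

def evalVecM {n p m : ℕ} (x : Fin n → Fin p → ℝ) (R : AddRepM p m) : Fin n → ℝ :=
  fun i => R.toFun (x i)

def normSqN {n : ℕ} (v : Fin n → ℝ) : ℝ := (1 / n) * ∑ i, v i ^ 2

def normN {n : ℕ} (v : Fin n → ℝ) : ℝ := Real.sqrt (normSqN v)

def innerN {n : ℕ} (u v : Fin n → ℝ) : ℝ := (1 / n) * ∑ i, u i * v i

def objectiveM {n p m : ℕ} (x : Fin n → Fin p → ℝ) (y : Fin n → ℝ) (lam mu : ℝ)
    (R : AddRepM p m) : ℝ :=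
  normSqN (fun i => y i - evalVecM x R i) + lam * OmegaGrM R + mu * (R.Gcount : ℝ)

def IsMinimizerM {n p m : ℕ} (K : ℕ) (x : Fin n → Fin p → ℝ) (y : Fin n → ℝ)
    (lam mu : ℝ) (Rhat : AddRepM p m) : Prop :=
  Rhat.Gcount ≤ K ∧ ∀ R : AddRepM p m, R.Gcount ≤ K →
    objectiveM x y lam mu Rhat ≤ objectiveM x y lam mu R

/-- Critical rate `rₙ = n^{-m/(2m+2)}`. -/
def rnM (m n : ℕ) : ℝ := (n : ℝ) ^ (-(m : ℝ) / (2 * m + 2))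

def logep (p : ℕ) : ℝ := Real.log (Real.exp 1 * p)

def gaussMeasure (n : ℕ) (σ : ℝ) : Measure (Fin n → ℝ) :=
  Measure.pi fun _ : Fin n => gaussianReal 0 ⟨σ ^ 2, sq_nonneg σ⟩

/-- Membership of a representation's support in the index set `J ⊆ 𝒥`. -/
def SuppIn {p m : ℕ} (R : AddRepM p m) (J : Finset (Fin p × Fin p)) : Prop :=
  (∀ j, R.main j ≠ 0 → (j, j) ∈ J) ∧
    (∀ j k, R.inter j k ≠ (0 : ℝ → ℝ → ℝ) → j < k ∧ (j, k) ∈ J)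

theorem cover_one {E : Type*} [NormedAddCommGroup E] [NormedSpace ℝ E] [FiniteDimensional ℝ E] :
    ∃ T : Finset E, T.card ≤ 5 ^ Module.finrank ℝ E ∧
      ∀ v : E, ‖v‖ ≤ 2 → ∃ t ∈ T, ‖v - t‖ ≤ 1 := by
  classical
  by_contra hcon
  push Not at hcon
  have key : ∀ k : ℕ, ∃ s : Finset E, s.card = k ∧ (∀ c ∈ s, ‖c‖ ≤ 2) ∧
      (∀ c ∈ s, ∀ d ∈ s, c ≠ d → 1 ≤ ‖c - d‖) := by
    intro k
    induction k with
    | zero => exact ⟨∅, by simp⟩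
    | succ k ih =>
      obtain ⟨s, hs, h1, h2⟩ := ih
      obtain ⟨v, hv, hv2⟩ := hcon s (Besicovitch.card_le_of_separated s h1 h2)
      have hvs : v ∉ s := by
        intro h
        have := hv2 v h
        simp at this
        linarith
      refine ⟨insert v s, by rw [Finset.card_insert_of_notMem hvs, hs], ?_, ?_⟩
      · intro c hc
        rcases Finset.mem_insert.1 hc with rfl | hc
        · exact hv
        · exact h1 c hc
      · intro c hc d hd hcd
        rcases Finset.mem_insert.1 hc with hc1 | hc1 <;> rcases Finset.mem_insert.1 hd with hd1 | hd1
        · exact absurd (hc1.trans hd1.symm) hcd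
        · rw [hc1]; exact (hv2 d hd1).le
        · rw [hd1, norm_sub_rev]; exact (hv2 c hc1).le
        · exact h2 c hc1 d hd1 hcd
  obtain ⟨s, hs, h1, h2⟩ := key (5 ^ Module.finrank ℝ E + 1)
  have := Besicovitch.card_le_of_separated s h1 h2
  omega

theorem cover_pow {E : Type*} [NormedAddCommGroup E] [NormedSpace ℝ E] [FiniteDimensional ℝ E]
    (R : ℝ) (hR : 0 < R) (j : ℕ) :
    ∃ T : Finset E, T.card ≤ 5 ^ (j * Module.finrank ℝ E) ∧
      ∀ v : E, ‖v‖ ≤ 2 ^ j * R → ∃ t ∈ T, ‖v - t‖ ≤ R := by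
  classical
  induction j with
  | zero => exact ⟨{0}, by simp, fun v hv => ⟨0, by simp, by simpa using hv⟩⟩
  | succ j ih =>
    obtain ⟨T, hT, hc⟩ := ih
    obtain ⟨T1, hT1, hc1⟩ := cover_one (E := E)
    refine ⟨(T1 ×ˢ T).image (fun q => (2 ^ j * R) • q.1 + q.2), ?_, ?_⟩
    · refine Finset.card_image_le.trans ?_
      rw [Finset.card_product, add_mul, one_mul, pow_add, mul_comm]
      exact Nat.mul_le_mul hT hT1
    · intro v hv
      have hp : 0 < 2 ^ j * R := by positivity
      obtain ⟨t1, ht1, h1⟩ := hc1 ((2 ^ j * R)⁻¹ • v) (by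
        rw [norm_smul, norm_inv, Real.norm_of_nonneg hp.le, inv_mul_le_iff₀ hp]
        rw [pow_succ] at hv; linarith)
      obtain ⟨t, ht, h2⟩ := hc (v - (2 ^ j * R) • t1) (by
        have : v - (2 ^ j * R) • t1 = (2 ^ j * R) • ((2 ^ j * R)⁻¹ • v - t1) := by
          rw [smul_sub, smul_inv_smul₀ hp.ne']
        rw [this, norm_smul, Real.norm_of_nonneg hp.le]
        nlinarith)
      refine ⟨_, Finset.mem_image.2 ⟨(t1, t), Finset.mk_mem_product ht1 ht, rfl⟩, ?_⟩
      simpa [sub_sub] using h2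

theorem cover_sub {E : Type*} [NormedAddCommGroup E] [NormedSpace ℝ E] [FiniteDimensional ℝ E]
    (V : Submodule ℝ E) (w : E) (R : ℝ) (hR : 0 < R) (j : ℕ) :
    ∃ T : Finset E, T.card ≤ 5 ^ (j * Module.finrank ℝ V) ∧
      ∀ v ∈ V, 2 * ‖v - w‖ ≤ 2 ^ j * R → ∃ t ∈ T, ‖v - t‖ ≤ R := by
  classical
  by_cases h : ∃ v ∈ V, 2 * ‖v - w‖ ≤ 2 ^ j * R
  · obtain ⟨v0, hv0, h0⟩ := h
    obtain ⟨T, hT, hc⟩ := cover_pow (E := V) R hR j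
    refine ⟨T.image (fun t : V => v0 + (t : E)), Finset.card_image_le.trans hT, ?_⟩
    intro v hv hvw
    obtain ⟨t, ht, h1⟩ := hc (⟨v, hv⟩ - ⟨v0, hv0⟩) (by
      change ‖v - v0‖ ≤ _
      have : v - v0 = (v - w) - (v0 - w) := by abel
      rw [this]
      refine (norm_sub_le _ _).trans (by linarith))
    refine ⟨v0 + t, Finset.mem_image.2 ⟨t, ht, rfl⟩, ?_⟩
    have h2 : ‖v - v0 - (t : E)‖ ≤ R := h1
    rwa [sub_sub] at h2
  · push Not at h
    exact ⟨∅, by simp, fun v hv hvw => absurd hvw (not_le.2 (h v hv))⟩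

theorem carl {E : Type*} [NormedAddCommGroup E] [NormedSpace ℝ E] [FiniteDimensional ℝ E]
    (H : Set E) (A : ℝ) (hA : 1 ≤ A) (m D : ℕ) (V : ℕ → Submodule ℝ E)
    (hD : ∀ k, Module.finrank ℝ (V k) ≤ D * 4 ^ k) (hH : ∀ h ∈ H, ‖h‖ ≤ 1)
    (happ : ∀ k, ∀ h ∈ H, ∃ v ∈ V k, ‖h - v‖ ≤ A / 2 ^ (k * m)) (k : ℕ) :
    ∃ T : Finset E, T.card ≤ 5 ^ (2 * (m + 3) * D * 4 ^ k) ∧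
      ∀ h ∈ H, ∃ t ∈ T, ‖h - t‖ ≤ 2 * A / 2 ^ (k * m) := by
  classical
  induction k with
  | zero =>
    refine ⟨{0}, ?_, fun h hh => ⟨0, by simp, ?_⟩⟩
    · simpa using Nat.one_le_pow _ _ (by norm_num)
    · have := hH h hh
      simp; linarith
  | succ k ih =>
    obtain ⟨T, hT, hc⟩ := ih
    have hR : 0 < A / 2 ^ ((k + 1) * m) := by positivity
    choose F hF1 hF2 using fun w : E => cover_sub (V (k + 1)) w _ hR (m + 3)
    refine ⟨T.biUnion F, ?_, ?_⟩
    · refine (Finset.card_biUnion_le_card_mul _ _ (5 ^ ((m + 3) * (D * 4 ^ (k + 1)))) ?_).trans ?_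
      · intro w _
        exact (hF1 w).trans (Nat.pow_le_pow_right (by norm_num) (Nat.mul_le_mul_left _ (hD _)))
      · refine (Nat.mul_le_mul_right _ hT).trans ?_
        rw [← pow_add]
        refine Nat.pow_le_pow_right (by norm_num) ?_
        rw [pow_succ]
        nlinarith [Nat.zero_le ((m + 3) * D * 4 ^ k)]
    · intro h hh
      obtain ⟨w, hw, h1⟩ := hc h hh
      obtain ⟨v, hv, h2⟩ := happ (k + 1) h hh
      have e : 2 * A / 2 ^ (k * m) = 2 * 2 ^ m * (A / 2 ^ ((k + 1) * m)) := by
        rw [add_mul, one_mul, pow_add]; field_simp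
      obtain ⟨t, ht, h3⟩ := hF2 w v hv (by
        have : v - w = (h - w) - (h - v) := by abel
        have h4 := norm_sub_le (h - w) (h - v)
        rw [← this] at h4
        rw [e] at h1
        have h5 : (1 : ℝ) ≤ 2 ^ m := one_le_pow₀ (by norm_num)
        rw [pow_add]
        nlinarith)
      refine ⟨t, Finset.mem_biUnion.2 ⟨w, hw, ht⟩, ?_⟩
      have : h - t = (h - v) + (v - t) := by abel
      rw [this]
      refine (norm_add_le _ _).trans ?_
      rw [mul_div_assoc]; linarith

/-- A compatible family of continuous mixed partial derivatives up to order `m`. -/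
def Fam (m : ℕ) (D : ℕ → ℕ → ℝ → ℝ → ℝ) : Prop :=
  (∀ a b, a + b ≤ m → Continuous (Function.uncurry (D a b))) ∧
  (∀ a b, a + b < m → ∀ u v, HasDerivAt (fun t => D a b t v) (D (a + 1) b u v) u) ∧
  (∀ a b, a + b < m → ∀ u v, HasDerivAt (fun t => D a b u t) (D a (b + 1) u v) v)

/-- Iterated integral over a square. -/
def sqI (a b δ : ℝ) (F : ℝ → ℝ → ℝ) : ℝ := ∫ u in a..a + δ, ∫ v in b..b + δ, F u v

theorem cont_inner {F : ℝ → ℝ → ℝ} (hF : Continuous (Function.uncurry F)) (a b : ℝ) :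
    Continuous (fun u => ∫ v in a..b, F u v) :=
  intervalIntegral.continuous_parametric_intervalIntegral_of_continuous' hF a b

theorem cont_swap {F : ℝ → ℝ → ℝ} (hF : Continuous (Function.uncurry F)) :
    Continuous (Function.uncurry (fun v u => F u v)) :=
  hF.comp (continuous_snd.prodMk continuous_fst)

theorem sqI_swap {F : ℝ → ℝ → ℝ} (hF : Continuous (Function.uncurry F)) (a b δ : ℝ) :
    sqI a b δ F = ∫ v in b..b + δ, ∫ u in a..a + δ, F u v := by
  unfold sqI
  apply intervalIntegral_intervalIntegral_swap
  refine (hF.continuousOn.integrableOn_compact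
    (isCompact_uIcc.prod isCompact_uIcc)).mono_set
    (Set.prod_mono Set.uIoc_subset_uIcc Set.uIoc_subset_uIcc)

theorem sqI_nonneg {F : ℝ → ℝ → ℝ} {a b δ : ℝ} (hδ : 0 ≤ δ) (h : ∀ u v, 0 ≤ F u v) :
    0 ≤ sqI a b δ F := by
  unfold sqI
  refine intervalIntegral.integral_nonneg (by linarith) fun u _ => ?_
  exact intervalIntegral.integral_nonneg (by linarith) fun v _ => h u v

theorem abs_sub_le_int {φ φ' : ℝ → ℝ} (h : ∀ s, HasDerivAt φ (φ' s) s) (hc : Continuous φ')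
    {a δ s t : ℝ} (hs : s ∈ Set.Icc a (a + δ)) (ht : t ∈ Set.Icc a (a + δ)) :
    |φ s - φ t| ≤ ∫ r in a..a + δ, |φ' r| := by
  wlog hst : t ≤ s generalizing s t
  · rw [abs_sub_comm]; exact this ht hs (le_of_not_ge hst)
  rw [← intervalIntegral.integral_eq_sub_of_hasDerivAt (fun x _ => h x)
    (hc.intervalIntegrable _ _)]
  refine (intervalIntegral.abs_integral_le_integral_abs hst).trans ?_
  exact intervalIntegral.integral_mono_interval ht.1 hst hs.2
    (Filter.Eventually.of_forall fun x => abs_nonneg _) (hc.abs.intervalIntegrable _ _)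

theorem abs_sub_le_bd {φ φ' : ℝ → ℝ} (h : ∀ s, HasDerivAt φ (φ' s) s) {B a δ s t : ℝ}
    (hB : ∀ r ∈ Set.Icc a (a + δ), |φ' r| ≤ B)
    (hs : s ∈ Set.Icc a (a + δ)) (ht : t ∈ Set.Icc a (a + δ)) :
    |φ s - φ t| ≤ B * δ := by
  have h1 := Convex.norm_image_sub_le_of_norm_hasDerivWithin_le
    (fun x _ => (h x).hasDerivWithinAt) hB (convex_Icc a (a + δ)) ht hs
  refine h1.trans ?_
  have hB0 : 0 ≤ B := (abs_nonneg _).trans (hB s hs)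
  refine mul_le_mul_of_nonneg_left ?_ hB0
  rw [Real.norm_eq_abs, abs_le]
  exact ⟨by linarith [hs.1, ht.2], by linarith [hs.2, ht.1]⟩

theorem taylor_one {φ φ' φ'' : ℝ → ℝ} (h : ∀ s, HasDerivAt φ (φ' s) s)
    (h' : ∀ s, HasDerivAt φ' (φ'' s) s) (hc : Continuous φ'')
    {a δ s t : ℝ} (hs : s ∈ Set.Icc a (a + δ)) (ht : t ∈ Set.Icc a (a + δ)) :
    |φ s - φ t - φ' t * (s - t)| ≤ (∫ r in a..a + δ, |φ'' r|) * δ := by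
  have := abs_sub_le_bd (φ := fun r => φ r - φ' t * r) (φ' := fun r => φ' r - φ' t)
    (fun r => by simpa using (h r).fun_sub ((hasDerivAt_id r).const_mul (φ' t)))
    (fun r hr => abs_sub_le_int h' hc hr ht) hs ht
  convert this using 2
  ring

theorem exists_good {k : ℝ → ℝ} (hk : Continuous k) {b δ : ℝ} (hδ : 0 < δ) :
    ∃ v ∈ Set.Icc b (b + δ), k v * δ ≤ ∫ t in b..b + δ, k t := by
  by_contra hcon
  push Not at hcon
  have h1 : ∫ t in b..b + δ, (∫ t in b..b + δ, k t) / δ < ∫ t in b..b + δ, k t := by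
    refine intervalIntegral.integral_lt_integral_of_continuousOn_of_le_of_exists_lt (by linarith)
      continuousOn_const hk.continuousOn ?_ ?_
    · intro x hx
      rw [div_le_iff₀ hδ]; exact (hcon x ⟨hx.1.le, hx.2⟩).le
    · refine ⟨b, ⟨le_rfl, by linarith⟩, ?_⟩
      rw [div_lt_iff₀ hδ]; exact hcon b ⟨le_rfl, by linarith⟩
  rw [intervalIntegral.integral_const] at h1
  simp at h1
  rw [mul_div_cancel₀ _ hδ.ne'] at h1
  exact lt_irrefl _ h1

/-- Polynomials of coordinatewise degree `< m`. -/
def PolyS (m : ℕ) : Submodule ℝ (ℝ → ℝ → ℝ) :=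
  Submodule.span ℝ (Set.range fun q : Fin m × Fin m => fun u v : ℝ => u ^ (q.1 : ℕ) * v ^ (q.2 : ℕ))

theorem mono_mem {m i j : ℕ} (hi : i < m) (hj : j < m) :
    (fun u v : ℝ => u ^ i * v ^ j) ∈ PolyS m :=
  Submodule.subset_span ⟨(⟨i, hi⟩, ⟨j, hj⟩), rfl⟩

theorem prim_v {m : ℕ} (b : ℝ) {q : ℝ → ℝ → ℝ} (hq : q ∈ PolyS m) :
    ∃ r ∈ PolyS (m + 1), (∀ u v, HasDerivAt (fun t => r u t) (q u v) v) ∧ ∀ u, r u b = 0 := by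
  induction hq using Submodule.span_induction with
  | mem q hq =>
    obtain ⟨⟨i, j⟩, rfl⟩ := hq
    refine ⟨fun u v => u ^ (i : ℕ) * ((v ^ (j + 1 : ℕ) - b ^ (j + 1 : ℕ)) / (j + 1 : ℝ)), ?_, ?_, ?_⟩
    · have h1 := (PolyS (m + 1)).smul_mem (1 / (j + 1 : ℝ))
        (mono_mem (m := m + 1) (i := i) (j := j + 1) (by omega) (by omega))
      have h2 := (PolyS (m + 1)).smul_mem (b ^ (j + 1 : ℕ) / (j + 1 : ℝ))
        (mono_mem (m := m + 1) (i := i) (j := 0) (by omega) (by omega))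
      convert (PolyS (m + 1)).sub_mem h1 h2 using 1
      ext u v
      simp
      ring
    · intro u v
      have h := ((((hasDerivAt_pow (j + 1 : ℕ) v).sub_const (b ^ (j + 1 : ℕ))).div_const
        (j + 1 : ℝ))).const_mul (u ^ (i : ℕ))
      refine h.congr_deriv ?_
      have : (j : ℝ) + 1 ≠ 0 := by positivity
      simp only [Nat.add_sub_cancel, Nat.cast_add, Nat.cast_one]
      field_simp
    · simp
  | zero => exact ⟨0, Submodule.zero_mem _, fun u v => by simpa using hasDerivAt_const v (0 : ℝ), fun u => rfl⟩
  | add q1 q2 _ _ h1 h2 =>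
    obtain ⟨r1, hr1, d1, z1⟩ := h1
    obtain ⟨r2, hr2, d2, z2⟩ := h2
    exact ⟨r1 + r2, Submodule.add_mem _ hr1 hr2, fun u v => (d1 u v).add (d2 u v),
      fun u => by simp [z1, z2]⟩
  | smul c q _ h =>
    obtain ⟨r, hr, d, z⟩ := h
    exact ⟨c • r, Submodule.smul_mem _ c hr, fun u v => (d u v).const_mul c, fun u => by simp [z]⟩

theorem prim_u {m : ℕ} (a b : ℝ) {q : ℝ → ℝ → ℝ} (hq : q ∈ PolyS m) :
    ∃ r ∈ PolyS (m + 1), (∀ u v, HasDerivAt (fun t => r t v) (q u b) u) ∧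
      (∀ v, r a v = 0) ∧ ∀ u v, r u v = r u b := by
  induction hq using Submodule.span_induction with
  | mem q hq =>
    obtain ⟨⟨i, j⟩, rfl⟩ := hq
    refine ⟨fun u v => b ^ (j : ℕ) * ((u ^ (i + 1 : ℕ) - a ^ (i + 1 : ℕ)) / (i + 1 : ℝ)), ?_, ?_, ?_, ?_⟩
    · have h1 := (PolyS (m + 1)).smul_mem (b ^ (j : ℕ) / (i + 1 : ℝ))
        (mono_mem (m := m + 1) (i := i + 1) (j := 0) (by omega) (by omega))
      have h2 := (PolyS (m + 1)).smul_mem (b ^ (j : ℕ) * a ^ (i + 1 : ℕ) / (i + 1 : ℝ))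
        (mono_mem (m := m + 1) (i := 0) (j := 0) (by omega) (by omega))
      convert (PolyS (m + 1)).sub_mem h1 h2 using 1
      ext u v
      simp
      ring
    · intro u v
      have h := ((((hasDerivAt_pow (i + 1 : ℕ) u).sub_const (a ^ (i + 1 : ℕ))).div_const
        (i + 1 : ℝ))).const_mul (b ^ (j : ℕ))
      refine h.congr_deriv ?_
      have : (i : ℝ) + 1 ≠ 0 := by positivity
      simp only [Nat.add_sub_cancel, Nat.cast_add, Nat.cast_one]
      field_simp
    · simp
    · simp
  | zero => exact ⟨0, Submodule.zero_mem _, fun u v => by simpa using hasDerivAt_const u (0 : ℝ),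
      fun u => rfl, fun u v => rfl⟩
  | add q1 q2 _ _ h1 h2 =>
    obtain ⟨r1, hr1, d1, z1, y1⟩ := h1
    obtain ⟨r2, hr2, d2, z2, y2⟩ := h2
    exact ⟨r1 + r2, Submodule.add_mem _ hr1 hr2, fun u v => (d1 u v).add (d2 u v),
      fun u => by simp [z1, z2], fun u v => by simp [y1 u v, y2 u v]⟩
  | smul c q _ h =>
    obtain ⟨r, hr, d, z, y⟩ := h
    exact ⟨c • r, Submodule.smul_mem _ c hr, fun u v => (d u v).const_mul c, fun u => by simp [z],
      fun u v => by simp [y u v]⟩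

theorem local_two {D : ℕ → ℕ → ℝ → ℝ → ℝ} (hD : Fam 2 D) (a b δ : ℝ) (hδ : 0 < δ) :
    ∃ q ∈ PolyS 2, ∀ u ∈ Set.Icc a (a + δ), ∀ v ∈ Set.Icc b (b + δ),
      |D 0 0 u v - q u v| ≤ sqI a b δ (fun u v => |D 2 0 u v|) +
        sqI a b δ (fun u v => |D 1 1 u v|) + sqI a b δ (fun u v => |D 0 2 u v|) := by
  obtain ⟨hc, hu, hv⟩ := hD
  have cabs : ∀ a b, a + b ≤ 2 → Continuous (Function.uncurry fun u v => |D a b u v|) :=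
    fun a b h => (hc a b h).abs
  have c1 : ∀ a b, a + b ≤ 2 → ∀ v, Continuous fun u => D a b u v := fun a b h v =>
    (hc a b h).comp (continuous_id.prodMk continuous_const)
  have c2 : ∀ a b, a + b ≤ 2 → ∀ u, Continuous fun v => D a b u v := fun a b h u =>
    (hc a b h).comp (continuous_const.prodMk continuous_id)
  obtain ⟨v0, hv0, gv⟩ := exists_good (cont_inner (cont_swap (cabs 2 0 (by norm_num))) a (a + δ))
    (b := b) hδ
  obtain ⟨u0, hu0, gu⟩ := exists_good (cont_inner (cabs 0 2 (by norm_num)) b (b + δ)) (b := a) hδ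
  rw [← sqI_swap (cabs 2 0 (by norm_num))] at gv
  change _ ≤ sqI a b δ _ at gu
  refine ⟨fun u v => D 0 0 u0 v0 + D 1 0 u0 v0 * (u - u0) + D 0 1 u0 v0 * (v - v0), ?_, ?_⟩
  · have h1 := (PolyS 2).smul_mem (D 0 0 u0 v0 - D 1 0 u0 v0 * u0 - D 0 1 u0 v0 * v0)
      (mono_mem (m := 2) (i := 0) (j := 0) (by omega) (by omega))
    have h2 := (PolyS 2).smul_mem (D 1 0 u0 v0)
      (mono_mem (m := 2) (i := 1) (j := 0) (by omega) (by omega))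
    have h3 := (PolyS 2).smul_mem (D 0 1 u0 v0)
      (mono_mem (m := 2) (i := 0) (j := 1) (by omega) (by omega))
    convert (PolyS 2).add_mem ((PolyS 2).add_mem h1 h2) h3 using 1
    ext u v
    simp
    ring
  · intro u hu' v hv'
    have e1 := taylor_one (fun s => hu 0 0 (by norm_num) s v0) (fun s => hu 1 0 (by norm_num) s v0)
      (c1 2 0 (by norm_num) v0) hu' hu0
    have e2 := taylor_one (fun s => hv 0 0 (by norm_num) u0 s) (fun s => hv 0 1 (by norm_num) u0 s)
      (c2 0 2 (by norm_num) u0) hv' hv0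
    have e3 : |(D 0 0 u v - D 0 0 u0 v) - (D 0 0 u v0 - D 0 0 u0 v0)| ≤
        sqI a b δ (fun u v => |D 1 1 u v|) := by
      have h1 := abs_sub_le_int (φ := fun t => D 0 0 u t - D 0 0 u0 t)
        (φ' := fun t => D 0 1 u t - D 0 1 u0 t)
        (fun s => (hv 0 0 (by norm_num) u s).sub (hv 0 0 (by norm_num) u0 s))
        ((c2 0 1 (by norm_num) u).sub (c2 0 1 (by norm_num) u0)) hv' hv0
      refine h1.trans ?_
      rw [sqI_swap (cabs 1 1 (by norm_num))]
      refine intervalIntegral.integral_mono_on (by linarith) ?_ ?_ ?_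
      · exact ((c2 0 1 (by norm_num) u).sub (c2 0 1 (by norm_num) u0)).abs.intervalIntegrable _ _
      · exact (cont_inner (cont_swap (cabs 1 1 (by norm_num))) a (a + δ)).intervalIntegrable _ _
      · intro t _
        exact abs_sub_le_int (fun s => hu 0 1 (by norm_num) s t) (c1 1 1 (by norm_num) t) hu' hu0
    have e : D 0 0 u v - (D 0 0 u0 v0 + D 1 0 u0 v0 * (u - u0) + D 0 1 u0 v0 * (v - v0)) =
      (D 0 0 u v0 - D 0 0 u0 v0 - D (0 + 1) 0 u0 v0 * (u - u0)) +
      ((D 0 0 u v - D 0 0 u0 v) - (D 0 0 u v0 - D 0 0 u0 v0)) +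
      (D 0 0 u0 v - D 0 0 u0 v0 - D 0 (0 + 1) u0 v0 * (v - v0)) := by simp; ring
    rw [e]
    refine (abs_add_three _ _ _).trans ?_
    refine add_le_add (add_le_add ?_ e3) ?_
    · exact e1.trans gv
    · exact e2.trans gu

/-- Sum of `L¹` norms of order-`m` derivatives on a square. -/
def L1S (m : ℕ) (a b δ : ℝ) (D : ℕ → ℕ → ℝ → ℝ → ℝ) : ℝ :=
  ∑ k ∈ Finset.range (m + 1), sqI a b δ (fun u v => |D k (m - k) u v|)

theorem local_gen (m : ℕ) (hm : 2 ≤ m) : ∀ {D : ℕ → ℕ → ℝ → ℝ → ℝ} (_ : Fam m D) (a b δ : ℝ)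
    (_ : 0 < δ), ∃ q ∈ PolyS m, ∀ u ∈ Set.Icc a (a + δ), ∀ v ∈ Set.Icc b (b + δ),
      |D 0 0 u v - q u v| ≤ 2 ^ (m - 2) * δ ^ (m - 2) * L1S m a b δ D := by
  induction m, hm using Nat.le_induction with
  | base =>
    intro D hD a b δ hδ
    obtain ⟨q, hq, h⟩ := local_two hD a b δ hδ
    refine ⟨q, hq, fun u hu v hv => (h u hu v hv).trans ?_⟩
    simp [L1S, Finset.sum_range_succ]
    linarith
  | succ m hm ih =>
    intro D hD a b δ hδ
    obtain ⟨hc, hu, hv⟩ := hD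
    obtain ⟨q1, hq1, h1⟩ := ih (D := fun k l => D (k + 1) l)
      ⟨fun k l h => hc _ _ (by omega), fun k l h => hu _ _ (by omega), fun k l h => hv _ _ (by omega)⟩ a b δ hδ
    obtain ⟨q2, hq2, h2⟩ := ih (D := fun k l => D k (l + 1))
      ⟨fun k l h => hc _ _ (by omega), fun k l h => hu _ _ (by omega), fun k l h => hv _ _ (by omega)⟩ a b δ hδ
    have s1 : L1S m a b δ (fun k l => D (k + 1) l) ≤ L1S (m + 1) a b δ D := by
      unfold L1S
      rw [Finset.sum_range_succ' _ (m + 1)]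
      simp only [Nat.add_sub_add_right]
      exact le_add_of_nonneg_right (sqI_nonneg hδ.le fun _ _ => abs_nonneg _)
    have s2 : L1S m a b δ (fun k l => D k (l + 1)) ≤ L1S (m + 1) a b δ D := by
      unfold L1S
      rw [Finset.sum_range_succ _ (m + 1)]
      refine (le_of_eq ?_).trans
        (le_add_of_nonneg_right (sqI_nonneg hδ.le fun _ _ => abs_nonneg _))
      refine Finset.sum_congr rfl fun k hk => ?_
      rw [Nat.sub_add_comm (by simpa [Nat.lt_succ_iff] using hk)]
    obtain ⟨r1, hr1, d1, z1, y1⟩ := prim_u a b hq1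
    obtain ⟨r2, hr2, d2, z2⟩ := prim_v b hq2
    refine ⟨(fun _ _ => D 0 0 a b) + r1 + r2, ?_, ?_⟩
    · refine Submodule.add_mem _ (Submodule.add_mem _ ?_ hr1) hr2
      have := (PolyS (m + 1)).smul_mem (D 0 0 a b)
        (mono_mem (m := m + 1) (i := 0) (j := 0) (by omega) (by omega))
      convert this using 1
      ext u v; simp
    · intro u hu' v hv'
      have ha : a ∈ Set.Icc a (a + δ) := ⟨le_rfl, by linarith⟩
      have hb : b ∈ Set.Icc b (b + δ) := ⟨le_rfl, by linarith⟩
      have f1 := abs_sub_le_bd (φ := fun s => D 0 0 s b - r1 s b)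
        (φ' := fun s => D 1 0 s b - q1 s b)
        (fun s => (hu 0 0 (by omega) s b).sub (d1 s b)) (fun s hs => h1 s hs b hb) hu' ha
      have f2 := abs_sub_le_bd (φ := fun s => D 0 0 u s - r2 u s)
        (φ' := fun s => D 0 1 u s - q2 u s)
        (fun s => (hv 0 0 (by omega) u s).sub (d2 u s)) (fun s hs => h2 u hu' s hs) hv' hb
      simp only [z1, z2, sub_zero] at f1 f2
      have e : D 0 0 u v - (((fun _ _ => D 0 0 a b) + r1 + r2 : ℝ → ℝ → ℝ) u v) =
          (D 0 0 u b - r1 u b - D 0 0 a b) + (D 0 0 u v - r2 u v - D 0 0 u b) := by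
        simp [y1 u v]; ring
      rw [e]
      refine (abs_add_le _ _).trans ((add_le_add f1 f2).trans ?_)
      have hp : 0 ≤ (2 : ℝ) ^ (m - 2) * δ ^ (m - 2) := by positivity
      have t1 := mul_le_mul_of_nonneg_left s1 hp
      have t2 := mul_le_mul_of_nonneg_left s2 hp
      have : m + 1 - 2 = (m - 2) + 1 := by omega
      rw [this, pow_succ, pow_succ]
      nlinarith

theorem sqI_add {F G : ℝ → ℝ → ℝ} (hF : Continuous (Function.uncurry F))
    (hG : Continuous (Function.uncurry G)) (a b δ : ℝ) :
    sqI a b δ (fun u v => F u v + G u v) = sqI a b δ F + sqI a b δ G := by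
  unfold sqI
  rw [← intervalIntegral.integral_add ((cont_inner hF _ _).intervalIntegrable _ _)
    ((cont_inner hG _ _).intervalIntegrable _ _)]
  congr 1
  ext u
  rw [← intervalIntegral.integral_add]
  · exact (hF.comp (continuous_const.prodMk continuous_id)).intervalIntegrable _ _
  · exact (hG.comp (continuous_const.prodMk continuous_id)).intervalIntegrable _ _

theorem sqI_const_mul (c : ℝ) (F : ℝ → ℝ → ℝ) (a b δ : ℝ) :
    sqI a b δ (fun u v => c * F u v) = c * sqI a b δ F := by
  simp [sqI]

theorem sqI_const (c a b δ : ℝ) : sqI a b δ (fun _ _ => c) = c * δ ^ 2 := by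
  simp [sqI]; ring

theorem sqI_cs {F : ℝ → ℝ → ℝ} (hF : Continuous (Function.uncurry F)) {a b δ : ℝ} (hδ : 0 < δ) :
    (sqI a b δ (fun u v => |F u v|)) ^ 2 ≤ δ ^ 2 * sqI a b δ (fun u v => F u v ^ 2) := by
  set I := sqI a b δ (fun u v => |F u v|) with hI
  have h0 : 0 ≤ sqI a b δ (fun u v => (|F u v| - I / δ ^ 2) ^ 2) :=
    sqI_nonneg hδ.le fun _ _ => sq_nonneg _
  have e : (fun u v => (|F u v| - I / δ ^ 2) ^ 2) =
      fun u v => (F u v ^ 2 + (-2 * (I / δ ^ 2)) * |F u v|) + (I / δ ^ 2) ^ 2 := by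
    ext u v
    rw [← sq_abs (F u v)]; ring
  have cF : Continuous (Function.uncurry fun u v => F u v ^ 2) := hF.pow 2
  have cA : Continuous (Function.uncurry fun u v => |F u v|) := hF.abs
  have cA' : Continuous (Function.uncurry fun u v => (-2 * (I / δ ^ 2)) * |F u v|) :=
    continuous_const.mul cA
  have cC : Continuous (Function.uncurry fun _ _ : ℝ => (I / δ ^ 2) ^ 2) := continuous_const
  have cFA : Continuous (Function.uncurry fun u v => F u v ^ 2 + (-2 * (I / δ ^ 2)) * |F u v|) :=
    cF.add cA'
  rw [e, sqI_add cFA cC,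
    sqI_add cF cA', sqI_const_mul, sqI_const, ← hI] at h0
  have hd : 0 < δ ^ 2 := by positivity
  have := mul_nonneg hd.le h0
  have e2 : δ ^ 2 * (sqI a b δ (fun u v => F u v ^ 2) + -2 * (I / δ ^ 2) * I +
      (I / δ ^ 2) ^ 2 * δ ^ 2) = δ ^ 2 * sqI a b δ (fun u v => F u v ^ 2) - I ^ 2 := by
    field_simp; ring
  linarith

theorem sqI_split {F : ℝ → ℝ → ℝ} (hF : Continuous (Function.uncurry F)) (a b δ : ℝ) :
    sqI a b δ F = sqI a b (δ / 2) F + sqI a (b + δ / 2) (δ / 2) F +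
      (sqI (a + δ / 2) b (δ / 2) F + sqI (a + δ / 2) (b + δ / 2) (δ / 2) F) := by
  have ei : ∀ u, ∫ v in b..b + δ, F u v = (∫ v in b..b + δ / 2, F u v) +
      ∫ v in b + δ / 2..b + δ / 2 + δ / 2, F u v := by
    intro u
    have hc : Continuous (F u) := hF.comp (continuous_const.prodMk continuous_id)
    rw [intervalIntegral.integral_add_adjacent_intervals (hc.intervalIntegrable _ _)
      (hc.intervalIntegrable _ _), add_assoc, add_halves]
  have c1 := cont_inner hF b (b + δ / 2)
  have c2 := cont_inner hF (b + δ / 2) (b + δ / 2 + δ / 2)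
  have c12 := c1.fun_add c2
  unfold sqI
  simp only [ei]
  rw [← intervalIntegral.integral_add (c1.intervalIntegrable _ _) (c2.intervalIntegrable _ _),
    ← intervalIntegral.integral_add (c1.intervalIntegrable _ _) (c2.intervalIntegrable _ _),
    intervalIntegral.integral_add_adjacent_intervals (c12.intervalIntegrable _ _)
      (c12.intervalIntegrable _ _), add_assoc a, add_halves]

/-- Sum of squared `L²` norms of order-`m` derivatives on a square. -/
def L2S (m : ℕ) (a b δ : ℝ) (D : ℕ → ℕ → ℝ → ℝ → ℝ) : ℝ :=
  ∑ k ∈ Finset.range (m + 1), sqI a b δ (fun u v => D k (m - k) u v ^ 2)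

theorem L2S_nonneg (m : ℕ) (a b δ : ℝ) (hδ : 0 ≤ δ) (D : ℕ → ℕ → ℝ → ℝ → ℝ) :
    0 ≤ L2S m a b δ D :=
  Finset.sum_nonneg fun _ _ => sqI_nonneg hδ fun _ _ => sq_nonneg _

theorem L1S_sq {m : ℕ} {D : ℕ → ℕ → ℝ → ℝ → ℝ} (hD : Fam m D) {a b δ : ℝ} (hδ : 0 < δ) :
    L1S m a b δ D ^ 2 ≤ (m + 1) * δ ^ 2 * L2S m a b δ D := by
  unfold L1S L2S
  refine (sq_sum_le_card_mul_sum_sq).trans ?_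
  rw [Finset.card_range, mul_assoc, Finset.mul_sum (a := δ ^ 2)]
  push_cast
  refine mul_le_mul_of_nonneg_left (Finset.sum_le_sum fun k hk => ?_) (by positivity)
  have : k ≤ m := by simpa [Nat.lt_succ_iff] using hk
  exact sqI_cs (hD.1 _ _ (by omega)) hδ

theorem L2S_split {m : ℕ} {D : ℕ → ℕ → ℝ → ℝ → ℝ} (hD : Fam m D) (a b δ : ℝ) :
    L2S m a b δ D = L2S m a b (δ / 2) D + L2S m a (b + δ / 2) (δ / 2) D +
      (L2S m (a + δ / 2) b (δ / 2) D + L2S m (a + δ / 2) (b + δ / 2) (δ / 2) D) := by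
  unfold L2S
  simp only [← Finset.sum_add_distrib]
  refine Finset.sum_congr rfl fun k hk => ?_
  have : k ≤ m := by simpa [Nat.lt_succ_iff] using hk
  have hc : Continuous (Function.uncurry fun u v => D k (m - k) u v ^ 2) :=
    (hD.1 k (m - k) (by omega)).pow 2
  exact sqI_split hc a b δ

/-- Approximability on the points in `S` by a subspace of dimension at most `N`. -/
def Appr (m : ℕ) {n : ℕ} (y z : Fin n → ℝ) (S : Finset (Fin n))
    (Φ : (ℕ → ℕ → ℝ → ℝ → ℝ) → ℝ) (N : ℝ) : Prop :=
  ∃ V : Submodule ℝ (Fin n → ℝ), (Module.finrank ℝ V : ℝ) ≤ N ∧ ∀ D, Fam m D →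
    ∃ v ∈ V, (∀ i, i ∉ S → v i = 0) ∧ ∑ i ∈ S, (D 0 0 (y i) (z i) - v i) ^ 2 ≤ Φ D

theorem Appr.mono {m n : ℕ} {y z : Fin n → ℝ} {S : Finset (Fin n)}
    {Φ Φ' : (ℕ → ℕ → ℝ → ℝ → ℝ) → ℝ} {N N' : ℝ} (h : Appr m y z S Φ N)
    (hΦ : ∀ D, Fam m D → Φ D ≤ Φ' D) (hN : N ≤ N') : Appr m y z S Φ' N' := by
  obtain ⟨V, hV, H⟩ := h
  refine ⟨V, hV.trans hN, fun D hD => ?_⟩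
  obtain ⟨v, hv, h0, h1⟩ := H D hD
  exact ⟨v, hv, h0, h1.trans (hΦ D hD)⟩

theorem Appr.union {m n : ℕ} {y z : Fin n → ℝ} {S S' : Finset (Fin n)}
    {Φ Φ' : (ℕ → ℕ → ℝ → ℝ → ℝ) → ℝ} {N N' : ℝ} (h : Appr m y z S Φ N)
    (h' : Appr m y z S' Φ' N') (hd : Disjoint S S') :
    Appr m y z (S ∪ S') (fun D => Φ D + Φ' D) (N + N') := by
  obtain ⟨V, hV, H⟩ := h
  obtain ⟨V', hV', H'⟩ := h'
  refine ⟨V ⊔ V', ?_, fun D hD => ?_⟩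
  · refine le_trans ?_ (add_le_add hV hV')
    exact_mod_cast Submodule.finrank_add_le_finrank_add_finrank V V'
  · obtain ⟨v, hv, h0, h1⟩ := H D hD
    obtain ⟨v', hv', h0', h1'⟩ := H' D hD
    refine ⟨v + v', Submodule.add_mem_sup hv hv', ?_, ?_⟩
    · intro i hi
      rw [Finset.mem_union, not_or] at hi
      simp [h0 i hi.1, h0' i hi.2]
    · rw [Finset.sum_union hd]
      refine add_le_add (le_trans (le_of_eq ?_) h1) (le_trans (le_of_eq ?_) h1')
      · refine Finset.sum_congr rfl fun i hi => ?_
        simp [h0' i (Finset.disjoint_left.1 hd hi)]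
      · refine Finset.sum_congr rfl fun i hi => ?_
        simp [h0 i (Finset.disjoint_right.1 hd hi)]

/-- All points of `S` lie in the closed square. -/
def InSq {n : ℕ} (y z : Fin n → ℝ) (S : Finset (Fin n)) (a b δ : ℝ) : Prop :=
  ∀ i ∈ S, y i ∈ Set.Icc a (a + δ) ∧ z i ∈ Set.Icc b (b + δ)

theorem Appr.split {m n : ℕ} {y z : Fin n → ℝ} {S : Finset (Fin n)} {a b δ κ α β : ℝ}
    (hS : InSq y z S a b δ)
    (h : ∀ a' b' S', S' ⊆ S → InSq y z S' a' b' (δ / 2) →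
      Appr m y z S' (fun D => κ * L2S m a' b' (δ / 2) D) (α + β * S'.card)) :
    Appr m y z S (fun D => κ * L2S m a b δ D) (4 * α + β * S.card) := by
  classical
  set Sl := S.filter (fun i => y i ≤ a + δ / 2) with hSl
  set Sr := S.filter (fun i => ¬ y i ≤ a + δ / 2) with hSr
  set S1 := Sl.filter (fun i => z i ≤ b + δ / 2) with hS1
  set S2 := Sl.filter (fun i => ¬ z i ≤ b + δ / 2) with hS2
  set S3 := Sr.filter (fun i => z i ≤ b + δ / 2) with hS3
  set S4 := Sr.filter (fun i => ¬ z i ≤ b + δ / 2) with hS4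
  have sl : Sl ⊆ S := Finset.filter_subset _ _
  have sr : Sr ⊆ S := Finset.filter_subset _ _
  have h1 := h a b S1 ((Finset.filter_subset _ _).trans sl) (by
    intro i hi
    simp only [hS1, hSl, Finset.mem_filter] at hi
    have := hS i hi.1.1
    simp only [Set.mem_Icc] at *
    exact ⟨⟨this.1.1, hi.1.2⟩, this.2.1, hi.2⟩)
  have h2 := h a (b + δ / 2) S2 ((Finset.filter_subset _ _).trans sl) (by
    intro i hi
    simp only [hS2, hSl, Finset.mem_filter, not_le] at hi
    have := hS i hi.1.1
    simp only [Set.mem_Icc] at *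
    exact ⟨⟨this.1.1, hi.1.2⟩, hi.2.le, by linarith⟩)
  have h3 := h (a + δ / 2) b S3 ((Finset.filter_subset _ _).trans sr) (by
    intro i hi
    simp only [hS3, hSr, Finset.mem_filter, not_le] at hi
    have := hS i hi.1.1
    simp only [Set.mem_Icc] at *
    exact ⟨⟨hi.1.2.le, by linarith⟩, this.2.1, hi.2⟩)
  have h4 := h (a + δ / 2) (b + δ / 2) S4 ((Finset.filter_subset _ _).trans sr) (by
    intro i hi
    simp only [hS4, hSr, Finset.mem_filter, not_le] at hi
    have := hS i hi.1.1
    simp only [Set.mem_Icc] at *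
    exact ⟨⟨hi.1.2.le, by linarith⟩, hi.2.le, by linarith⟩)
  have u12 := h1.union h2 (Finset.disjoint_filter_filter_not _ _ _)
  have u34 := h3.union h4 (Finset.disjoint_filter_filter_not _ _ _)
  rw [hS1, hS2, Finset.filter_union_filter_not_eq] at u12
  rw [hS3, hS4, Finset.filter_union_filter_not_eq] at u34
  have u := u12.union u34 (Finset.disjoint_filter_filter_not _ _ _)
  rw [hSl, hSr, Finset.filter_union_filter_not_eq] at u
  refine u.mono (fun D hD => ?_) ?_
  · rw [L2S_split hD a b δ]; linarith
  · rw [← hSl, ← hSr, ← hS1, ← hS2, ← hS3, ← hS4]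
    have c1 : S1.card + S2.card = Sl.card := Finset.card_filter_add_card_filter_not _
    have c2 : S3.card + S4.card = Sr.card := Finset.card_filter_add_card_filter_not _
    have c3 : Sl.card + Sr.card = S.card := Finset.card_filter_add_card_filter_not _
    rw [← c3, ← c1, ← c2]
    push_cast
    linarith

theorem finrank_PolyS (m : ℕ) : Module.finrank ℝ (PolyS m) ≤ m ^ 2 := by
  refine (finrank_range_le_card _).trans ?_
  simp [sq]

theorem Appr.leaf {m n : ℕ} (hm : 2 ≤ m) {y z : Fin n → ℝ} {S : Finset (Fin n)} {a b δ ε : ℝ}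
    (hδ : 0 < δ) (hS : InSq y z S a b δ) (hw : S.card * δ ^ (2 * (m - 1)) ≤ ε) :
    Appr m y z S (fun D => (4 ^ (m - 2) * (m + 1) * ε) * L2S m a b δ D) (m ^ 2) := by
  classical
  let ev : (ℝ → ℝ → ℝ) →ₗ[ℝ] (Fin n → ℝ) :=
    { toFun := fun q i => if i ∈ S then q (y i) (z i) else 0
      map_add' := by intro p q; ext i; by_cases h : i ∈ S <;> simp [h]
      map_smul' := by intro c q; ext i; by_cases h : i ∈ S <;> simp [h] }
  have : FiniteDimensional ℝ (PolyS m) := FiniteDimensional.span_of_finite ℝ (Set.finite_range _)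
  refine ⟨(PolyS m).map ev, ?_, fun D hD => ?_⟩
  · exact_mod_cast (Submodule.finrank_map_le ev (PolyS m)).trans (finrank_PolyS m)
  · obtain ⟨q, hq, H⟩ := local_gen m hm hD a b δ hδ
    refine ⟨ev q, Submodule.mem_map_of_mem hq, fun i hi => by simp [ev, hi], ?_⟩
    have hL := L1S_sq hD (a := a) (b := b) hδ
    have hL2 := L2S_nonneg m a b δ hδ.le D
    calc ∑ i ∈ S, (D 0 0 (y i) (z i) - ev q i) ^ 2
        ≤ ∑ i ∈ S, (2 ^ (m - 2) * δ ^ (m - 2) * L1S m a b δ D) ^ 2 := by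
          refine Finset.sum_le_sum fun i hi => ?_
          have h1 := H _ (hS i hi).1 _ (hS i hi).2
          have e : ev q i = q (y i) (z i) := by simp [ev, hi]
          rw [e]
          exact sq_le_sq' (abs_le.1 h1).1 (abs_le.1 h1).2
      _ = (S.card * (4 ^ (m - 2) * δ ^ (2 * (m - 2)))) * L1S m a b δ D ^ 2 := by
          rw [Finset.sum_const, nsmul_eq_mul, mul_pow, mul_pow, ← pow_mul, ← pow_mul,
            mul_comm (m - 2) 2, pow_mul 2 2]
          norm_num; ring
      _ ≤ (S.card * (4 ^ (m - 2) * δ ^ (2 * (m - 2)))) * ((m + 1) * δ ^ 2 * L2S m a b δ D) :=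
          mul_le_mul_of_nonneg_left hL (by positivity)
      _ = (4 ^ (m - 2) * (m + 1)) * (S.card * δ ^ (2 * (m - 1))) * L2S m a b δ D := by
          have : 2 * (m - 1) = 2 * (m - 2) + 2 := by omega
          rw [this, pow_add]; ring
      _ ≤ _ := by
          refine mul_le_mul_of_nonneg_right ?_ hL2
          exact mul_le_mul_of_nonneg_left hw (by positivity)

theorem half_pow (m : ℕ) (δ : ℝ) : (δ / 2) ^ (2 * (m - 1)) = δ ^ (2 * (m - 1)) / 4 ^ (m - 1) := by
  rw [div_pow, pow_mul 2]; norm_num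

theorem Appr.tree {m n : ℕ} (hm : 2 ≤ m) {y z : Fin n → ℝ} {ε : ℝ} (hε : 0 < ε) (t : ℕ) :
    ∀ (S : Finset (Fin n)) (a b δ : ℝ), 0 < δ → InSq y z S a b δ →
      S.card * δ ^ (2 * (m - 1)) ≤ ε * 4 ^ t →
    Appr m y z S (fun D => (4 ^ (m - 2) * (m + 1) * ε) * L2S m a b δ D)
      (m ^ 2 * (1 + 4 * (S.card * δ ^ (2 * (m - 1)) / ε))) := by
  have leafcase : ∀ (S : Finset (Fin n)) (a b δ : ℝ), 0 < δ → InSq y z S a b δ →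
      S.card * δ ^ (2 * (m - 1)) ≤ ε → 
    Appr m y z S (fun D => (4 ^ (m - 2) * (m + 1) * ε) * L2S m a b δ D)
      (m ^ 2 * (1 + 4 * (S.card * δ ^ (2 * (m - 1)) / ε))) := by
    intro S a b δ hδ hS hw
    refine (Appr.leaf hm hδ hS hw).mono (fun _ _ => le_rfl) ?_
    refine le_mul_of_one_le_right (by positivity) ?_
    have : 0 ≤ 4 * (S.card * δ ^ (2 * (m - 1)) / ε) := by positivity
    linarith
  induction t with
  | zero =>
    intro S a b δ hδ hS hw
    exact leafcase S a b δ hδ hS (by simpa using hw)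
  | succ t ih =>
    intro S a b δ hδ hS hw
    by_cases hl : S.card * δ ^ (2 * (m - 1)) ≤ ε
    · exact leafcase S a b δ hδ hS hl
    push Not at hl
    have h4 : (4 : ℝ) ≤ 4 ^ (m - 1) := by
      calc (4 : ℝ) = 4 ^ 1 := by norm_num
        _ ≤ _ := pow_le_pow_right₀ (by norm_num) (by omega)
    refine (Appr.split (α := m ^ 2)
      (β := m ^ 2 * (4 * (δ ^ (2 * (m - 1)) / 4 ^ (m - 1) / ε))) hS ?_).mono (fun _ _ => le_rfl) ?_
    · intro a' b' S' hS' hin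
      refine (ih S' a' b' (δ / 2) (by positivity) hin ?_).mono (fun _ _ => le_rfl) (le_of_eq ?_)
      · have hc : (S'.card : ℝ) ≤ S.card := by exact_mod_cast Finset.card_le_card hS'
        rw [half_pow, mul_div_assoc', div_le_iff₀ (by positivity)]
        have h5 : (S'.card : ℝ) * δ ^ (2 * (m - 1)) ≤ S.card * δ ^ (2 * (m - 1)) :=
          mul_le_mul_of_nonneg_right hc (by positivity)
        refine h5.trans (hw.trans ?_)
        rw [pow_succ, ← mul_assoc]
        exact mul_le_mul_of_nonneg_left h4 (by positivity)
      · rw [half_pow]; ring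
    · have e : 4 * (m : ℝ) ^ 2 + m ^ 2 * (4 * (δ ^ (2 * (m - 1)) / 4 ^ (m - 1) / ε)) * S.card =
        m ^ 2 * (4 + 4 * (S.card * δ ^ (2 * (m - 1)) / ε) / 4 ^ (m - 1)) := by ring
      rw [e]
      refine mul_le_mul_of_nonneg_left ?_ (by positivity)
      have hr : 1 < S.card * δ ^ (2 * (m - 1)) / ε := by rwa [lt_div_iff₀ hε, one_mul]
      generalize S.card * δ ^ (2 * (m - 1)) / ε = r at hr
      have : 4 * r / 4 ^ (m - 1) ≤ r := by
        rw [div_le_iff₀ (by positivity)]; nlinarith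
      linarith

theorem Appr.grid {m n : ℕ} (hm : 2 ≤ m) {y z : Fin n → ℝ} {ε : ℝ} (hε : 0 < ε) (L : ℕ) :
    ∀ (S : Finset (Fin n)) (a b δ : ℝ), 0 < δ → InSq y z S a b δ →
    Appr m y z S (fun D => (4 ^ (m - 2) * (m + 1) * ε) * L2S m a b δ D)
      (m ^ 2 * (4 ^ L + 4 * (S.card * (δ ^ (2 * (m - 1)) / 4 ^ (L * (m - 1))) / ε))) := by
  induction L with
  | zero =>
    intro S a b δ hδ hS
    obtain ⟨t, ht⟩ := pow_unbounded_of_one_lt (S.card * δ ^ (2 * (m - 1)) / ε)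
      (by norm_num : (1 : ℝ) < 4)
    refine (Appr.tree hm hε t S a b δ hδ hS ?_).mono (fun _ _ => le_rfl) (le_of_eq (by simp))
    rw [div_lt_iff₀ hε] at ht
    linarith
  | succ L ih =>
    intro S a b δ hδ hS
    refine (Appr.split (α := m ^ 2 * 4 ^ L)
      (β := m ^ 2 * (4 * (δ ^ (2 * (m - 1)) / 4 ^ (m - 1) / 4 ^ (L * (m - 1)) / ε))) hS ?_).mono
      (fun _ _ => le_rfl) (le_of_eq ?_)
    · intro a' b' S' hS' hin
      refine (ih S' a' b' (δ / 2) (by positivity) hin).mono (fun _ _ => le_rfl) (le_of_eq ?_)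
      rw [half_pow]; ring
    · have : (4 : ℝ) ^ ((L + 1) * (m - 1)) = 4 ^ (m - 1) * 4 ^ (L * (m - 1)) := by
        rw [← pow_add]; congr 1; ring
      rw [this, ← div_div]; ring

theorem Appr.unit {m n : ℕ} (hm : 2 ≤ m) (hn : 1 ≤ n) {y z : Fin n → ℝ}
    (hy : ∀ i, y i ∈ Set.Icc (0 : ℝ) 1) (hz : ∀ i, z i ∈ Set.Icc (0 : ℝ) 1) (L : ℕ) :
    Appr m y z Finset.univ
      (fun D => (4 ^ (m - 2) * (m + 1) * (n / 4 ^ (L * m))) * L2S m 0 0 1 D)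
      (5 * m ^ 2 * 4 ^ L) := by
  have hn' : (0 : ℝ) < n := by exact_mod_cast hn
  refine (Appr.grid hm (ε := n / 4 ^ (L * m)) (by positivity) L Finset.univ 0 0 1 one_pos
    (fun i _ => by simpa using ⟨hy i, hz i⟩)).mono (fun _ _ => le_rfl) (le_of_eq ?_)
  have : (4 : ℝ) ^ (L * m) = 4 ^ (L * (m - 1)) * 4 ^ L := by
    rw [← pow_add]; congr 1
    obtain ⟨k, rfl⟩ : ∃ k, m = k + 1 := ⟨m - 1, by omega⟩
    simp; ring
  rw [this]
  simp
  field_simp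
  ring

/-- Directional derivative operator. -/
def dw (w : ℝ × ℝ) (F : ℝ × ℝ → ℝ) : ℝ × ℝ → ℝ := fun q => fderiv ℝ F q w

theorem dw_contDiff {k : ℕ} {F : ℝ × ℝ → ℝ} (w : ℝ × ℝ) (hF : ContDiff ℝ ((k + 1 : ℕ) : ℕ∞) F) :
    ContDiff ℝ (k : ℕ∞) (dw w F) := by
  have : ContDiff ℝ (k : ℕ∞) (fderiv ℝ F) := hF.fderiv_right (by norm_cast)
  exact this.clm_apply contDiff_const

theorem dw_iter_contDiff {a : ℕ} : ∀ {k : ℕ} {F : ℝ × ℝ → ℝ} (w : ℝ × ℝ)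
    (_ : ContDiff ℝ ((k + a : ℕ) : ℕ∞) F), ContDiff ℝ (k : ℕ∞) ((dw w)^[a] F) := by
  induction a with
  | zero => intro k F w h; simpa using h
  | succ a ih =>
    intro k F w h
    rw [Function.iterate_succ_apply]
    exact ih w (dw_contDiff w h)

theorem dw_comm {k : ℕ} {F : ℝ × ℝ → ℝ} (w w' : ℝ × ℝ)
    (hF : ContDiff ℝ ((k + 2 : ℕ) : ℕ∞) F) : dw w (dw w' F) = dw w' (dw w F) := by
  have hd : Differentiable ℝ (fderiv ℝ F) := by
    have : ContDiff ℝ ((k + 1 : ℕ) : ℕ∞) (fderiv ℝ F) := hF.fderiv_right (by norm_cast)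
    exact this.differentiable (by simp)
  have key : ∀ a b q, dw a (dw b F) q = fderiv ℝ (fderiv ℝ F) q a b := by
    intro a b q
    unfold dw
    rw [fderiv_clm_apply (hd q) (differentiableAt_const b)]
    simp
  ext q
  rw [key, key]
  refine IsSymmSndFDerivAt.eq (hF.contDiffAt.isSymmSndFDerivAt ?_) w w'
  simp only [minSmoothness_of_isRCLikeNormedField]
  have h2 : (2 : ℕ) ≤ k + 2 := by omega
  have h3 : ((2 : ℕ) : ℕ∞) ≤ ((k + 2 : ℕ) : ℕ∞) := Nat.cast_le.2 h2
  have h4 : (((2 : ℕ) : ℕ∞) : WithTop ℕ∞) ≤ (((k + 2 : ℕ) : ℕ∞) : WithTop ℕ∞) :=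
    WithTop.coe_le_coe.2 h3
  exact h4

theorem dw_iter_comm {a : ℕ} : ∀ {F : ℝ × ℝ → ℝ} (w w' : ℝ × ℝ)
    (_ : ContDiff ℝ ((a + 1 : ℕ) : ℕ∞) F), dw w ((dw w')^[a] F) = (dw w')^[a] (dw w F) := by
  induction a with
  | zero => intro F w w' _; rfl
  | succ a ih =>
    intro F w w' h
    rw [Function.iterate_succ_apply, Function.iterate_succ_apply, ih w w' (dw_contDiff w' h),
      dw_comm w w' h]

theorem slice_u {F : ℝ × ℝ → ℝ} (hF : Differentiable ℝ F) (u v : ℝ) :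
    HasDerivAt (fun t => F (t, v)) (dw (1, 0) F (u, v)) u :=
  (hF (u, v)).hasFDerivAt.comp_hasDerivAt u ((hasDerivAt_id u).prodMk (hasDerivAt_const u v))

theorem slice_v {F : ℝ × ℝ → ℝ} (hF : Differentiable ℝ F) (u v : ℝ) :
    HasDerivAt (fun t => F (u, t)) (dw (0, 1) F (u, v)) v :=
  (hF (u, v)).hasFDerivAt.comp_hasDerivAt v ((hasDerivAt_const v u).prodMk (hasDerivAt_id v))

theorem iter_u {a : ℕ} : ∀ {F : ℝ × ℝ → ℝ} (_ : ContDiff ℝ (a : ℕ∞) F) (u v : ℝ),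
    iteratedDeriv a (fun t => F (t, v)) u = (dw (1, 0))^[a] F (u, v) := by
  induction a with
  | zero => intro F _ u v; simp
  | succ a ih =>
    intro F h u v
    rw [iteratedDeriv_succ', Function.iterate_succ_apply, ← ih (dw_contDiff _ h)]
    congr 1
    ext t
    exact (slice_u (h.differentiable (by simp)) t v).deriv

theorem iter_v {a : ℕ} : ∀ {F : ℝ × ℝ → ℝ} (_ : ContDiff ℝ (a : ℕ∞) F) (u v : ℝ),
    iteratedDeriv a (fun t => F (u, t)) v = (dw (0, 1))^[a] F (u, v) := by
  induction a with
  | zero => intro F _ u v; simp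
  | succ a ih =>
    intro F h u v
    rw [iteratedDeriv_succ', Function.iterate_succ_apply, ← ih (dw_contDiff _ h)]
    congr 1
    ext t
    exact (slice_v (h.differentiable (by simp)) u t).deriv

/-- The family of mixed derivatives of `g`. -/
def famOf (g : ℝ → ℝ → ℝ) (a b : ℕ) (u v : ℝ) : ℝ :=
  (dw (1, 0))^[a] ((dw (0, 1))^[b] (fun q => g q.1 q.2)) (u, v)

theorem pd_eq {a b : ℕ} {g : ℝ → ℝ → ℝ}
    (hg : ContDiff ℝ ((a + b : ℕ) : ℕ∞) (fun q : ℝ × ℝ => g q.1 q.2)) (u v : ℝ) :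
    pd a b g u v = famOf g a b u v := by
  unfold pd famOf
  have h1 : ContDiff ℝ (b : ℕ∞) (fun q : ℝ × ℝ => g q.1 q.2) := hg.of_le (by norm_cast; omega)
  rw [← iter_u (dw_iter_contDiff _ hg)]
  congr 1
  ext t
  exact iter_v h1 t v

theorem famOf_fam {m : ℕ} {g : ℝ → ℝ → ℝ}
    (hg : ContDiff ℝ (m : ℕ∞) (fun q : ℝ × ℝ => g q.1 q.2)) : Fam m (famOf g) := by
  have hk : ∀ k, k ≤ m → ContDiff ℝ (k : ℕ∞) (fun q : ℝ × ℝ => g q.1 q.2) := fun k h =>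
    hg.of_le (by norm_cast)
  refine ⟨fun a b h => ?_, fun a b h u v => ?_, fun a b h u v => ?_⟩
  · have h1 := dw_iter_contDiff (k := 0) (a := a) (1, 0)
      (dw_iter_contDiff (a := b) (0, 1) (hk (0 + a + b) (by omega)))
    exact h1.continuous
  · have h1 := dw_iter_contDiff (k := 1) (a := a) (1, 0)
      (dw_iter_contDiff (a := b) (0, 1) (hk (1 + a + b) (by omega)))
    have h2 := slice_u (h1.differentiable (by simp)) u v
    unfold famOf
    rw [Function.iterate_succ_apply']
    exact h2
  · have h0 := dw_iter_contDiff (k := a + 1) (a := b) (0, 1) (hk (a + 1 + b) (by omega))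
    have h1 := dw_iter_contDiff (k := 1) (a := a) (1, 0)
      (dw_iter_contDiff (a := b) (0, 1) (hk (1 + a + b) (by omega)))
    have h2 := slice_v (h1.differentiable (by simp)) u v
    unfold famOf
    rw [Function.iterate_succ_apply' _ b, ← dw_iter_comm _ _ h0]
    exact h2

theorem setInt_eq_sqI {F : ℝ → ℝ → ℝ} (hF : Continuous (Function.uncurry F)) :
    ∫ q in (Set.Icc (0:ℝ) 1) ×ˢ (Set.Icc (0:ℝ) 1), F q.1 q.2 = sqI 0 0 1 F := by
  unfold sqI
  have hi : IntegrableOn (Function.uncurry F) (Set.Icc (0:ℝ) 1 ×ˢ Set.Icc (0:ℝ) 1)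
      (volume.prod volume) :=
    hF.continuousOn.integrableOn_compact (isCompact_Icc.prod isCompact_Icc)
  have h := setIntegral_prod _ hi
  rw [← Measure.volume_eq_prod] at h
  refine h.trans ?_
  simp only [zero_add, intervalIntegral.integral_of_le (zero_le_one' ℝ),
    ← integral_Icc_eq_integral_Ioc]
  rfl

theorem Omega2M_eq {m : ℕ} {g : ℝ → ℝ → ℝ}
    (hg : ContDiff ℝ (m : ℕ∞) (fun q : ℝ × ℝ => g q.1 q.2)) :
    Omega2M m g = L2S m 0 0 1 (famOf g) := by
  unfold Omega2M L2S
  refine Finset.sum_congr rfl fun k hk => ?_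
  have hk' : k ≤ m := by simpa [Nat.lt_succ_iff] using hk
  have e : k + (m - k) = m := by omega
  have hc : Continuous (Function.uncurry fun u v => famOf g k (m - k) u v ^ 2) :=
    ((famOf_fam hg).1 k (m - k) (by omega)).pow 2
  rw [← setInt_eq_sqI hc]
  congr 1
  ext q
  rw [pd_eq (by rw [e]; exact hg)]

theorem Omega2M_uni {m : ℕ} {h : ℝ → ℝ} (hh : ContDiff ℝ (m : ℕ∞) h) :
    Omega2M m (fun u _ => h u) = Omega1M m h := by
  unfold Omega2M Omega1M
  rw [Finset.sum_range_succ, Finset.sum_eq_zero]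
  · simp only [Nat.sub_self, pd, iteratedDeriv_zero, zero_add]
    have hc : Continuous (Function.uncurry fun u _ : ℝ => iteratedDeriv m h u ^ 2) := by
      have := hh.continuous_iteratedDeriv m le_rfl
      exact (this.comp continuous_fst).pow 2
    rw [setInt_eq_sqI hc]
    simp [sqI]
  · intro k hk
    have hk' : k < m := by simpa using hk
    have : m - k ≠ 0 := by omega
    simp [pd, iteratedDeriv_const, this]

theorem normN_eq {n : ℕ} (v : Fin n → ℝ) :
    normN v = ‖(Real.sqrt n)⁻¹ • (WithLp.toLp 2 v : EuclideanSpace ℝ (Fin n))‖ := by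
  rw [norm_smul, EuclideanSpace.norm_eq, normN, normSqN, Real.sqrt_mul (by positivity)]
  simp
  exact Or.inl (abs_of_nonneg (Real.sqrt_nonneg _)).symm

theorem approx_biv {m n : ℕ} (hm : 2 ≤ m) (hn : 1 ≤ n) {y z : Fin n → ℝ}
    (hy : ∀ i, y i ∈ Set.Icc (0 : ℝ) 1) (hz : ∀ i, z i ∈ Set.Icc (0 : ℝ) 1) (L : ℕ) :
    ∃ V : Submodule ℝ (Fin n → ℝ), Module.finrank ℝ V ≤ 5 * m ^ 2 * 4 ^ L ∧
      ∀ g : ℝ → ℝ → ℝ, ContDiff ℝ (m : ℕ∞) (fun q : ℝ × ℝ => g q.1 q.2) →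
      ∃ v ∈ V, normN (fun i => g (y i) (z i) - v i) ≤
        Real.sqrt (4 ^ (m - 2) * (m + 1)) / 2 ^ (L * m) * Real.sqrt (Omega2M m g) := by
  obtain ⟨V, hV, H⟩ := Appr.unit hm hn hy hz L
  refine ⟨V, by exact_mod_cast hV, fun g hg => ?_⟩
  obtain ⟨v, hv, -, h⟩ := H _ (famOf_fam hg)
  refine ⟨v, hv, ?_⟩
  have hn' : (0 : ℝ) < n := by exact_mod_cast hn
  rw [Omega2M_eq hg]
  have e : (2 : ℝ) ^ (L * m) = Real.sqrt (4 ^ (L * m)) := by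
    have h4 : (4 : ℝ) ^ (L * m) = (2 ^ (L * m)) ^ 2 := by
      rw [← pow_mul, mul_comm (L * m) 2, pow_mul (2 : ℝ) 2 (L * m)]
      norm_num
    rw [h4, Real.sqrt_sq (by positivity)]
  rw [e, ← Real.sqrt_div (by positivity), ← Real.sqrt_mul (by positivity)]
  refine Real.sqrt_le_sqrt ?_
  unfold normSqN
  have h' : ∑ i, (g (y i) (z i) - v i) ^ 2 ≤
      4 ^ (m - 2) * (m + 1) * (n / 4 ^ (L * m)) * L2S m 0 0 1 (famOf g) := h
  calc 1 / (n : ℝ) * ∑ i, (g (y i) (z i) - v i) ^ 2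
      ≤ 1 / (n : ℝ) * (4 ^ (m - 2) * (m + 1) * (n / 4 ^ (L * m)) * L2S m 0 0 1 (famOf g)) :=
        mul_le_mul_of_nonneg_left h' (by positivity)
    _ = _ := by field_simp

theorem finrank_sup_le {n : ℕ} {ι : Type*} (J : Finset ι)
    (V : ι → Submodule ℝ (Fin n → ℝ)) (B : ℕ) (h : ∀ q, Module.finrank ℝ (V q) ≤ B) :
    Module.finrank ℝ (J.sup V : Submodule ℝ (Fin n → ℝ)) ≤ J.card * B := by
  classical
  induction J using Finset.induction_on with
  | empty => simp
  | insert q J hq ih =>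
    rw [Finset.sup_insert, Finset.card_insert_of_notMem hq]
    refine (Submodule.finrank_add_le_finrank_add_finrank _ _).trans ?_
    have := h q
    rw [add_mul]; omega

/-- The bivariate component attached to an index pair. -/
def comp {p m : ℕ} (R : AddRepM p m) (q : Fin p × Fin p) : ℝ → ℝ → ℝ :=
  if q.1 = q.2 then fun u _ => R.main q.1 u else if q.1 < q.2 then R.inter q.1 q.2 else 0

theorem comp_contDiff {p m : ℕ} (R : AddRepM p m) (q : Fin p × Fin p) :
    ContDiff ℝ (m : ℕ∞) (fun s : ℝ × ℝ => comp R q s.1 s.2) := by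
  unfold comp
  split_ifs
  · exact (R.smooth_main q.1).comp contDiff_fst
  · exact R.smooth_inter q.1 q.2
  · exact contDiff_const

theorem comp_zero {p m : ℕ} {R : AddRepM p m} {J : Finset (Fin p × Fin p)} (hR : SuppIn R J)
    {q : Fin p × Fin p} (hq : q ∉ J) : comp R q = 0 := by
  unfold comp
  obtain ⟨j, k⟩ := q
  split_ifs with h1 h2
  · simp only at h1
    subst h1
    have : R.main j = 0 := by
      by_contra h; exact hq (hR.1 j h)
    simp only [this]; rfl
  · by_contra h
    exact hq (hR.2 j k h).2
  · rfl

theorem toFun_eq {p m : ℕ} {R : AddRepM p m} {J : Finset (Fin p × Fin p)} (hR : SuppIn R J)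
    (x : Fin p → ℝ) : R.toFun x = ∑ q ∈ J, comp R q (x q.1) (x q.2) := by
  classical
  rw [Finset.sum_subset (Finset.subset_univ J) (fun q _ hq => by rw [comp_zero hR hq]; rfl),
    Fintype.sum_prod_type, AddRepM.toFun, ← Finset.sum_add_distrib]
  refine Finset.sum_congr rfl fun j _ => ?_
  have e : R.main j (x j) = ∑ k, if j = k then R.main j (x j) else 0 := by simp
  rw [e, ← Finset.sum_add_distrib]
  refine Finset.sum_congr rfl fun k _ => ?_
  unfold comp
  by_cases h1 : j = k
  · subst h1; simp
  · by_cases h2 : j < k <;> simp [h1, h2]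

theorem omega_le {p m : ℕ} (R : AddRepM p m) (J : Finset (Fin p × Fin p)) :
    ∑ q ∈ J, Real.sqrt (Omega2M m (comp R q)) ≤ OmegaTildeGrM R := by
  classical
  refine (Finset.sum_le_univ_sum_of_nonneg fun _ => Real.sqrt_nonneg _).trans (le_of_eq ?_)
  rw [Fintype.sum_prod_type, OmegaTildeGrM, ← Finset.sum_add_distrib]
  refine Finset.sum_congr rfl fun j _ => ?_
  have e : √(Omega1M m (R.main j)) = ∑ k, if j = k then √(Omega1M m (R.main j)) else 0 := by simp
  rw [e, ← Finset.sum_add_distrib]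
  refine Finset.sum_congr rfl fun k _ => ?_
  unfold comp
  by_cases h1 : j = k
  · subst h1
    simp only [if_true, lt_irrefl, if_false, add_zero]
    rw [Omega2M_uni (R.smooth_main j)]
  · by_cases h2 : j < k
    · simp [h1, h2]
    · have : Omega2M m (0 : ℝ → ℝ → ℝ) = 0 := by
        have h0 : (0 : ℝ → ℝ → ℝ) = fun _ _ => (0 : ℝ) := rfl
        rw [h0, Omega2M_uni (h := fun _ => 0) contDiff_const]
        simp [Omega1M, iteratedDeriv_const]
      simp [h1, h2, this]

end Census

open Census in
/-- Lemma 1, entropy bound.  For every `J ⊆ 𝒥` with `|J| ≤ M = K(K+1)/2`,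
the empirical-norm metric entropy of the normalized class
`H(J) = {h ∈ F(J) : ‖h‖ₙ/rₙ + Ω̃_gr(h) ≤ 1}` satisfies
`H(u, H(J), ‖·‖ₙ) ≤ C u^{-2/m}` for all `u ∈ (0,1)`, with `C` depending only on `m, K`;
equivalently there is a `u`-cover of `H(J)` (in the `‖·‖ₙ` pseudometric, via evaluation
vectors) whose log-cardinality is at most `C u^{-2/m}`. -/
theorem statement5 (m K : ℕ) (hm : 2 ≤ m) (hK : 1 ≤ K) :
    ∃ C : ℝ, 0 < C ∧
      ∀ (n p : ℕ), 1 ≤ n → 1 ≤ p →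
      ∀ (x : Fin n → Fin p → ℝ), (∀ i j, x i j ∈ Set.Icc (0:ℝ) 1) →
      ∀ (J : Finset (Fin p × Fin p)), (∀ q ∈ J, q.1 ≤ q.2) →
        J.card ≤ K * (K + 1) / 2 →
      ∀ (u : ℝ), 0 < u → u < 1 →
        ∃ T : Finset (Fin n → ℝ),
          (∀ R : AddRepM p m, SuppIn R J →
            normN (evalVecM x R) / rnM m n + OmegaTildeGrM R ≤ 1 →
            ∃ t ∈ T, normN (fun i => evalVecM x R i - t i) ≤ u) ∧
          Real.log (T.card : ℝ) ≤ C * u ^ (-(2 : ℝ) / m) := by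
  classical
  set A : ℝ := Real.sqrt (4 ^ (m - 2) * (m + 1)) with hAdef
  have hA : 1 ≤ A := by
    rw [hAdef, Real.one_le_sqrt]
    have h1 : (1 : ℝ) ≤ 4 ^ (m - 2) := one_le_pow₀ (by norm_num)
    have h2 : (0 : ℝ) ≤ m := by positivity
    nlinarith
  set D : ℕ := K * (K + 1) / 2 * (5 * m ^ 2) with hD
  have hm0 : (m : ℝ) ≠ 0 := by positivity
  refine ⟨(2 * (m + 3) * D * Real.log 5) * (4 * (2 * A) ^ ((2 : ℝ) / m)) + 1, ?_, ?_⟩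
  · have := Real.log_nonneg (by norm_num : (1 : ℝ) ≤ 5)
    positivity
  intro n p hn hp x hx J hJ hJc u hu0 hu1
  have hn' : (0 : ℝ) < n := by exact_mod_cast hn
  have hsn : 0 < Real.sqrt n := Real.sqrt_pos.2 hn'
  have hr0 : 0 < rnM m n := Real.rpow_pos_of_pos hn' _
  have hr1 : rnM m n ≤ 1 := by
    refine Real.rpow_le_one_of_one_le_of_nonpos (by exact_mod_cast hn) ?_
    exact div_nonpos_of_nonpos_of_nonneg (by simp) (by positivity)
  let φ : (Fin n → ℝ) →ₗ[ℝ] EuclideanSpace ℝ (Fin n) :=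
    (Real.sqrt n)⁻¹ • (WithLp.linearEquiv 2 ℝ (Fin n → ℝ)).symm.toLinearMap
  have hφ : ∀ v, ‖φ v‖ = normN v := fun v => (normN_eq v).symm
  let ψ : EuclideanSpace ℝ (Fin n) → (Fin n → ℝ) := fun e => Real.sqrt n • (WithLp.ofLp e)
  have hψ : ∀ e, φ (ψ e) = e := by
    intro e
    ext i
    simp [φ, ψ, hsn.ne']
  choose V hV1 hV2 using fun (L : ℕ) (q : Fin p × Fin p) =>
    approx_biv hm hn (fun i => hx i q.1) (fun i => hx i q.2) L
  let H : Set (EuclideanSpace ℝ (Fin n)) := {e | ∃ R : AddRepM p m, SuppIn R J ∧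
    normN (evalVecM x R) / rnM m n + OmegaTildeGrM R ≤ 1 ∧ e = φ (evalVecM x R)}
  have hOm : ∀ R : AddRepM p m, ∑ q ∈ J, Real.sqrt (Omega2M m (comp R q)) ≤ OmegaTildeGrM R :=
    fun R => omega_le R J
  have hOm0 : ∀ R : AddRepM p m, 0 ≤ OmegaTildeGrM R := fun R =>
    (Finset.sum_nonneg fun _ _ => Real.sqrt_nonneg _).trans (hOm R)
  obtain ⟨k, hk1, hk2⟩ := exists_nat_pow_near (x := (2 * A / u) ^ ((1 : ℝ) / m)) (y := 2)
    (Real.one_le_rpow (by rw [le_div_iff₀ hu0]; linarith) (by positivity)) (by norm_num)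
  obtain ⟨T, hT1, hT2⟩ := carl H A hA m D (fun L => (J.sup (V L)).map φ)
    (by
      intro L
      refine (Submodule.finrank_map_le _ _).trans ((finrank_sup_le J (V L) _ (hV1 L)).trans ?_)
      rw [hD, mul_assoc (K * (K + 1) / 2)]
      exact Nat.mul_le_mul_right _ hJc)
    (by
      rintro e ⟨R, hR, hb, rfl⟩
      rw [hφ]
      have h1 : normN (evalVecM x R) / rnM m n ≤ 1 := by linarith [hOm0 R]
      rw [div_le_one hr0] at h1
      exact h1.trans hr1)
    (by
      rintro L e ⟨R, hR, hb, rfl⟩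
      choose v hv1 hv2 using fun q => hV2 L q (comp R q) (comp_contDiff R q)
      refine ⟨φ (∑ q ∈ J, v q), Submodule.mem_map_of_mem (Submodule.sum_mem _ fun q hq =>
        Finset.le_sup (f := V L) hq (hv1 q)), ?_⟩
      rw [← map_sub]
      have e1 : evalVecM x R - ∑ q ∈ J, v q =
          ∑ q ∈ J, (fun i => comp R q (x i q.1) (x i q.2) - v q i) := by
        ext i
        simp [evalVecM, toFun_eq hR, Finset.sum_sub_distrib]
      rw [e1, map_sum]
      refine (norm_sum_le _ _).trans ?_
      simp only [hφ]
      refine (Finset.sum_le_sum fun q _ => hv2 q).trans ?_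
      rw [← Finset.mul_sum]
      refine mul_le_of_le_one_right (by positivity) ((hOm R).trans ?_)
      have : 0 ≤ normN (evalVecM x R) / rnM m n := div_nonneg (Real.sqrt_nonneg _) hr0.le
      linarith) (k + 1)
  have hpos : 0 < 2 * A / u := by positivity
  refine ⟨T.image ψ, ?_, ?_⟩
  · intro R hR hb
    obtain ⟨t, ht, h⟩ := hT2 _ ⟨R, hR, hb, rfl⟩
    refine ⟨ψ t, Finset.mem_image_of_mem _ ht, ?_⟩
    have e1 : (fun i => evalVecM x R i - ψ t i) = evalVecM x R - ψ t := rfl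
    rw [e1, ← hφ, map_sub, hψ]
    refine h.trans ?_
    rw [div_le_iff₀ (by positivity), pow_mul, mul_comm u, ← div_le_iff₀ hu0]
    have h2 := pow_le_pow_left₀ (by positivity) hk2.le m
    rwa [← Real.rpow_natCast, ← Real.rpow_mul hpos.le, one_div_mul_cancel hm0,
      Real.rpow_one] at h2
  · have hc : (T.image ψ).card ≤ 5 ^ (2 * (m + 3) * D * 4 ^ (k + 1)) :=
      Finset.card_image_le.trans hT1
    have hl5 := Real.log_nonneg (by norm_num : (1 : ℝ) ≤ 5)
    have h1 : Real.log ((T.image ψ).card : ℝ) ≤ (2 * (m + 3) * D * Real.log 5) * 4 ^ (k + 1) := by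
      rcases Nat.eq_zero_or_pos (T.image ψ).card with h0 | h0
      · rw [h0]; simp; positivity
      · have h3 : ((T.image ψ).card : ℝ) ≤ 5 ^ (2 * (m + 3) * D * 4 ^ (k + 1)) := by
          exact_mod_cast hc
        refine (Real.log_le_log (by exact_mod_cast h0) h3).trans (le_of_eq ?_)
        rw [Real.log_pow]; push_cast; ring
    have h2 : (4 : ℝ) ^ (k + 1) ≤ 4 * (2 * A) ^ ((2 : ℝ) / m) * u ^ (-(2 : ℝ) / m) := by
      have h3 := pow_le_pow_left₀ (by positivity) hk1 2
      rw [← Real.rpow_natCast ((2 * A / u) ^ ((1 : ℝ) / m)), ← Real.rpow_mul hpos.le] at h3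
      have e2 : (1 : ℝ) / m * ((2 : ℕ) : ℝ) = 2 / m := by push_cast; ring
      have e3 : ((2 : ℝ) ^ k) ^ 2 = 4 ^ k := by rw [← pow_mul, mul_comm, pow_mul]; norm_num
      rw [e2, e3, Real.div_rpow (by positivity) hu0.le] at h3
      rw [neg_div, Real.rpow_neg hu0.le, pow_succ, mul_assoc 4, ← div_eq_mul_inv]
      linarith
    have hup : 0 ≤ u ^ (-(2 : ℝ) / m) := by positivity
    have hc0 : (0 : ℝ) ≤ 2 * (m + 3) * D * Real.log 5 := by positivity
    calc _ ≤ _ := h1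
      _ ≤ _ := mul_le_mul_of_nonneg_left h2 hc0
      _ ≤ _ := by rw [add_mul, one_mul]; linarith
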